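/- arXiv:math/0503602 — 2 statements merged into one kernel-verified Lean document; each statement's English description precedes it below -/
import Mathlib

section
/- For any two probability measures μ and ν on the unit circle S¹ there exists a unique probability measure ρ on S¹ (called the monotone convolution μ ▷ ν) such that K_ρ(z) = K_μ(K_ν(z)) for all z in the open unit disc 𝔻. -/
/-!
Write `F_μ(z) = 1 + ψ_μ(z) = ∫ 1 / (1 - z x) dμ(x)` (`cauchyT`). Then `K_μ = 1 - 1 / F_μ`, so on the
disc `K_ρ = K_μ ∘ K_ν` is equivalent to `F_ρ = F_μ ∘ K_ν`. Since `re F_ν > 1 / 2` on the disc, `K_ν`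
maps the disc into itself (`Km_mem_ball`).

Uniqueness: the Taylor coefficients of `F_ρ` are the moments of `ρ`, and these determine `ρ` by the
Stone-Weierstrass theorem (`ext_of_cauchyT`).

Existence: `G = F_μ ∘ K_ν` is holomorphic on the disc, with `G 0 = 1` and `re G > 1 / 2`. By the
Herglotz representation theorem (`herglotz`) it equals `F_ρ` for some probability measure `ρ`. That
theorem is obtained from the Schwarz formula for the dilations `G (r z)`, `r < 1`
(`circleAverage_herglotz`), and weak compactness of the probability measures on the circle.
-/

open MeasureTheory Metric

noncomputable instance : MeasurableSpace Circle := borel Circle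
instance : BorelSpace Circle := ⟨rfl⟩

/-- `ψ_μ(z) = ∫_{S¹} zx/(1-zx) dμ(x)` for a measure `μ` on the unit circle. -/
noncomputable def psiM (μ : Measure Circle) (z : ℂ) : ℂ :=
  ∫ x : Circle, (z * x) / (1 - z * x) ∂μ

/-- The K-transform `K_μ(z) = ψ_μ(z)/(1 + ψ_μ(z))` of a measure on the unit circle. -/
noncomputable def Km (μ : Measure Circle) (z : ℂ) : ℂ :=
  psiM μ z / (1 + psiM μ z)

open Filter Topology

/-! ### The transform `F_μ` and the `K`-transform -/

/-- The transform `∫ 1 / (1 - z x) dμ(x) = 1 + ψ_μ(z)` of a measure on the unit circle. -/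
noncomputable def cauchyT (μ : Measure Circle) (z : ℂ) : ℂ :=
  ∫ x : Circle, 1 / (1 - z * x) ∂μ

lemma norm_mul_circle (z : ℂ) (x : Circle) : ‖z * x‖ = ‖z‖ := by
  rw [norm_mul, Circle.norm_coe, mul_one]

lemma one_sub_ne {z : ℂ} (hz : z ∈ ball (0 : ℂ) 1) (x : Circle) : 1 - z * x ≠ 0 := by
  intro h
  have h1 : ‖z * x‖ = 1 := by rw [← sub_eq_zero.1 h]; simp
  rw [norm_mul_circle] at h1
  simp [h1] at hz

lemma continuous_kernel {z : ℂ} (hz : z ∈ ball (0 : ℂ) 1) :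
    Continuous fun x : Circle => 1 / (1 - z * (x : ℂ)) :=
  Continuous.div (by fun_prop) (by fun_prop) (one_sub_ne hz)

lemma Continuous.integrable_circle {E : Type*} [NormedAddCommGroup E] [SecondCountableTopology E]
    [MeasurableSpace E] [BorelSpace E] {f : Circle → E} (hf : Continuous f)
    (μ : Measure Circle) [IsFiniteMeasure μ] : Integrable f μ :=
  (BoundedContinuousFunction.mkOfCompact ⟨f, hf⟩).integrable μ

lemma psiM_eq (μ : Measure Circle) [IsProbabilityMeasure μ] {z : ℂ} (hz : z ∈ ball (0 : ℂ) 1) :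
    psiM μ z = cauchyT μ z - 1 := by
  have h : cauchyT μ z - 1 = ∫ x : Circle, (1 / (1 - z * x) - 1) ∂μ := by
    rw [integral_sub ((continuous_kernel hz).integrable_circle μ) (integrable_const _)]
    simp [cauchyT]
  rw [h, psiM]
  refine integral_congr_ae (.of_forall fun x => ?_)
  have := one_sub_ne hz x
  field_simp
  ring

/-- In the disc `re (1 / (1 - u))` is at least `1 / (1 + ‖u‖)`, a bound that depends only on the
modulus and exceeds `1 / 2`; integrated over the circle, it stays strictly above `1 / 2`. -/
lemma re_kernel {u : ℂ} (hu : ‖u‖ < 1) : 1 / (1 + ‖u‖) ≤ (1 / (1 - u)).re := by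
  have h1 : 1 - u ≠ 0 := by
    intro h
    rw [← sub_eq_zero.1 h] at hu
    simp at hu
  have h2 : 0 < Complex.normSq (1 - u) := Complex.normSq_pos.2 h1
  have h0 := norm_nonneg u
  have h3 : ‖u‖ ^ 2 = u.re ^ 2 + u.im ^ 2 := by
    rw [← Complex.normSq_eq_norm_sq, Complex.normSq_apply]; ring
  have h4 := neg_le_of_abs_le (Complex.abs_re_le_norm u)
  rw [one_div (1 - u), Complex.inv_re, div_le_div_iff₀ (by positivity) h2]
  rw [Complex.normSq_apply]
  simp only [Complex.sub_re, Complex.sub_im, Complex.one_re, Complex.one_im]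
  nlinarith [mul_nonneg (by linarith : 0 ≤ ‖u‖ + u.re) (by linarith : 0 ≤ 1 - ‖u‖)]

lemma re_cauchyT (μ : Measure Circle) [IsProbabilityMeasure μ] {z : ℂ} (hz : z ∈ ball (0 : ℂ) 1) :
    1 / (1 + ‖z‖) ≤ (cauchyT μ z).re := by
  have hi := (continuous_kernel hz).integrable_circle μ
  have h1 : (cauchyT μ z).re = ∫ x : Circle, (1 / (1 - z * (x : ℂ))).re ∂μ :=
    (integral_re hi).symm
  have h2 : 1 / (1 + ‖z‖) = ∫ _x : Circle, 1 / (1 + ‖z‖) ∂μ := by simp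
  rw [h1, h2]
  refine integral_mono (integrable_const _) hi.re fun x => ?_
  have := re_kernel (u := z * x) (by rw [norm_mul_circle]; simpa using hz)
  rwa [norm_mul_circle] at this

lemma half_lt_re_cauchyT (μ : Measure Circle) [IsProbabilityMeasure μ] {z : ℂ} (hz : z ∈ ball (0 : ℂ) 1) :
    1 / 2 < (cauchyT μ z).re := by
  refine lt_of_lt_of_le ?_ (re_cauchyT μ hz)
  have : ‖z‖ < 1 := by simpa using hz
  have := norm_nonneg z
  exact one_div_lt_one_div_of_lt (by linarith) (by linarith)

lemma cauchyT_ne_zero (μ : Measure Circle) [IsProbabilityMeasure μ] {z : ℂ} (hz : z ∈ ball (0 : ℂ) 1) :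
    cauchyT μ z ≠ 0 := by
  intro h
  have := half_lt_re_cauchyT μ hz
  norm_num [h] at this

lemma Km_eq (μ : Measure Circle) [IsProbabilityMeasure μ] {z : ℂ} (hz : z ∈ ball (0 : ℂ) 1) :
    Km μ z = 1 - (cauchyT μ z)⁻¹ := by
  have := cauchyT_ne_zero μ hz
  rw [Km, psiM_eq μ hz, add_sub_cancel]
  field_simp

/-- The map `s ↦ 1 - 1 / s` sends the half-plane `re s > 1 / 2` into the unit disc, so `K_μ` is a
self-map of the disc and `K_μ ∘ K_ν` makes sense. -/
lemma Km_mem_ball (μ : Measure Circle) [IsProbabilityMeasure μ] {z : ℂ} (hz : z ∈ ball (0 : ℂ) 1) :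
    Km μ z ∈ ball (0 : ℂ) 1 := by
  have h0 := cauchyT_ne_zero μ hz
  have h := half_lt_re_cauchyT μ hz
  have h1 : 1 - (cauchyT μ z)⁻¹ = (cauchyT μ z - 1) / cauchyT μ z := by field_simp
  rw [Km_eq μ hz, mem_ball_zero_iff, h1, norm_div, div_lt_one (norm_pos_iff.2 h0)]
  refine lt_of_pow_lt_pow_left₀ 2 (norm_nonneg _) ?_
  rw [← Complex.normSq_eq_norm_sq, ← Complex.normSq_eq_norm_sq, Complex.normSq_apply, Complex.normSq_apply]
  simp only [Complex.sub_re, Complex.sub_im, Complex.one_re, Complex.one_im]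
  nlinarith

/-! ### Moments and uniqueness -/

/-- Integrating the geometric series: the Taylor coefficients of the transform at `0` are the
moments of the measure. -/
lemma hasFPowerSeriesOnBall_cauchyT (μ : Measure Circle) [IsFiniteMeasure μ] :
    HasFPowerSeriesOnBall (cauchyT μ)
      (FormalMultilinearSeries.ofScalars ℂ fun n : ℕ => ∫ x : Circle, (x : ℂ) ^ n ∂μ) 0 1 := by
  refine ⟨?_, one_pos, fun {z} hz => ?_⟩
  · refine (FormalMultilinearSeries.le_radius_of_bound (r := 1) _ (μ.real Set.univ) fun n => ?_)
    rw [FormalMultilinearSeries.ofScalars_norm]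
    simp only [NNReal.coe_one, one_pow, mul_one]
    refine (norm_integral_le_of_norm_le_const (C := 1) (.of_forall fun x => ?_)).trans (by simp)
    rw [norm_pow, Circle.norm_coe, one_pow]
  · have hz' : ‖z‖ < 1 := by
      have : z ∈ ball (0:ℂ) 1 := by simpa [Metric.eball, edist_zero_right, ← ofReal_norm] using hz
      simpa using this
    have key : HasSum (fun n : ℕ => ∫ x : Circle, (z * (x : ℂ)) ^ n ∂μ)
        (∫ x : Circle, ∑' n : ℕ, (z * (x : ℂ)) ^ n ∂μ) := by
      refine hasSum_integral_of_summable_integral_norm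
        (fun n => Continuous.integrable_circle (by fun_prop) μ) ?_
      simp only [norm_pow, norm_mul_circle, integral_const]
      exact (summable_geometric_of_lt_one (norm_nonneg _) hz').const_smul _
    have e : cauchyT μ (0 + z) = ∫ x : Circle, ∑' n : ℕ, (z * (x : ℂ)) ^ n ∂μ := by
      rw [zero_add, cauchyT]
      refine integral_congr_ae (.of_forall fun x => ?_)
      simp only
      rw [tsum_geometric_of_norm_lt_one (by rwa [norm_mul_circle]), one_div]
    rw [e]
    convert! key using 2 with n
    simp only [FormalMultilinearSeries.ofScalars_apply_eq, smul_eq_mul]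
    simp_rw [mul_pow, integral_const_mul]
    ring

lemma differentiableOn_cauchyT (μ : Measure Circle) [IsFiniteMeasure μ] :
    DifferentiableOn ℂ (cauchyT μ) (ball 0 1) := by
  have := (hasFPowerSeriesOnBall_cauchyT μ).differentiableOn
  refine this.mono fun z hz => ?_
  simpa [Metric.eball, edist_zero_right, ← ofReal_norm] using hz

lemma moments_eq {μ ν : Measure Circle} [IsFiniteMeasure μ] [IsFiniteMeasure ν]
    (h : ∀ z ∈ ball (0 : ℂ) 1, cauchyT μ z = cauchyT ν z) (n : ℕ) :
    ∫ x : Circle, (x : ℂ) ^ n ∂μ = ∫ x : Circle, (x : ℂ) ^ n ∂ν := by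
  have h1 := (hasFPowerSeriesOnBall_cauchyT μ).hasFPowerSeriesAt
  have h2 := (hasFPowerSeriesOnBall_cauchyT ν).hasFPowerSeriesAt
  have h3 : cauchyT μ =ᶠ[𝓝 0] cauchyT ν :=
    Filter.eventually_of_mem (ball_mem_nhds 0 one_pos) h
  have := (h1.congr h3).eq_formalMultilinearSeries h2
  exact congrFun (FormalMultilinearSeries.ofScalars_series_injective ℂ ℂ this) n

/-- Negative moments are complex conjugates of positive ones, because `x⁻¹ = conj x` on the circle. -/
lemma monomial_eq {μ ν : Measure Circle} [IsFiniteMeasure μ] [IsFiniteMeasure ν]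
    (h : ∀ n : ℕ, ∫ x : Circle, (x : ℂ) ^ n ∂μ = ∫ x : Circle, (x : ℂ) ^ n ∂ν) (n : ℤ) :
    ∫ x : Circle, (x : ℂ) ^ n ∂μ = ∫ x : Circle, (x : ℂ) ^ n ∂ν := by
  obtain ⟨m, rfl | rfl⟩ := n.eq_nat_or_neg
  · simpa using h m
  · have : ∀ x : Circle, (x : ℂ) ^ (-(m : ℤ)) = (starRingEnd ℂ) ((x : ℂ) ^ m) := fun x => by
      rw [zpow_neg, zpow_natCast, map_pow, ← Circle.coe_inv_eq_conj, Circle.coe_inv, inv_pow]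
    simp_rw [this, integral_conj, h]

open BoundedContinuousFunction in
/-- A finite measure on the circle is determined by its transform on the disc: the transform gives
all integer moments, and the Laurent polynomials form a star-subalgebra that separates points. -/
lemma ext_of_cauchyT {μ ν : Measure Circle} [IsFiniteMeasure μ] [IsFiniteMeasure ν]
    (h : ∀ z ∈ ball (0 : ℂ) 1, cauchyT μ z = cauchyT ν z) : μ = ν := by
  let f : BoundedContinuousFunction Circle ℂ :=
    BoundedContinuousFunction.mkOfCompact ⟨fun x : Circle => (x : ℂ), by fun_prop⟩
  have hf : ∀ x : Circle, f x = (x : ℂ) := fun x => rfl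
  refine ext_of_forall_mem_subalgebra_integral_eq_of_pseudoEMetric_complete_countable
    (𝕜 := ℂ) (A := StarAlgebra.adjoin ℂ {f}) ?_ ?_
  · intro x y hxy
    refine ⟨f, ⟨toContinuousMapStarₐ ℂ f, ?_, rfl⟩, fun e => hxy (Circle.ext e)⟩
    exact ⟨f, StarAlgebra.self_mem_adjoin_singleton ℂ f, rfl⟩
  · intro g hg
    -- As a vector space, the star-subalgebra is spanned by the monomials `x ^ n`, `n : ℤ`.
    have hg' : g ∈ Submodule.span ℂ (Submonoid.closure ({f} ∪ star {f}) : Set _) := by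
      rw [← Algebra.adjoin_eq_span]
      exact hg
    clear hg
    induction hg' using Submodule.span_induction with
    | mem g hg =>
      obtain ⟨n, hn⟩ : ∃ n : ℤ, ∀ x : Circle, g x = (x : ℂ) ^ n := by
        induction hg using Submonoid.closure_induction with
        | mem g hg =>
          rcases hg with hg | hg
          · exact ⟨1, fun x => by rw [Set.mem_singleton_iff.1 hg, hf, zpow_one]⟩
          · refine ⟨-1, fun x => ?_⟩
            have : g = star f := by rw [← star_star g, Set.mem_singleton_iff.1 hg]
            rw [this, zpow_neg_one, ← Circle.coe_inv, Circle.coe_inv_eq_conj]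
            rfl
        | one => exact ⟨0, fun x => by simp⟩
        | mul a b _ _ ha hb =>
          obtain ⟨n, hn⟩ := ha
          obtain ⟨m, hm⟩ := hb
          exact ⟨n + m, fun x => by
            rw [BoundedContinuousFunction.mul_apply, hn, hm, zpow_add₀ (Circle.coe_ne_zero x)]⟩
      simp_rw [hn]
      exact monomial_eq (moments_eq h) n
    | zero => simp
    | add a b _ _ ha hb =>
      simp only [BoundedContinuousFunction.add_apply]
      rw [integral_add (a.integrable μ) (b.integrable μ),
        integral_add (a.integrable ν) (b.integrable ν), ha, hb]
    | smul c a _ ha =>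
      simp only [BoundedContinuousFunction.smul_apply]
      rw [integral_smul, integral_smul, ha]

/-! ### The Herglotz representation -/

open ComplexConjugate in
/-- Schwarz formula for a function continuous up to the boundary. With `2 re g - 1 = g + conj g - 1`
on the boundary, the term in `g` and the constant are Cauchy integrals, while the term in `conj g`
is the conjugate of the mean value of a function holomorphic in the disc. -/
lemma circleAverage_herglotz {g : ℂ → ℂ} (hg : DiffContOnCl ℂ g (ball 0 1)) (h0 : g 0 = 1)
    {z : ℂ} (hz : z ∈ ball (0 : ℂ) 1) :
    Real.circleAverage (fun w => ((2 * (g w).re - 1 : ℝ) : ℂ) * (1 / (1 - z * conj w))) 0 1 = g z := by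
  have hcl : closure (ball (0 : ℂ) 1) = closedBall 0 1 := closure_ball _ one_ne_zero
  have hz1 : ‖z‖ < 1 := by simpa using hz
  have hgs : ContinuousOn g (sphere 0 1) :=
    (hcl ▸ hg.continuousOn).mono sphere_subset_closedBall
  have hne : ∀ w ∈ sphere (0 : ℂ) 1, w - z ≠ 0 := fun w hw e => by
    rw [sub_eq_zero.1 e] at hw
    simp [hz1.ne] at hw
  have hne' : ∀ w ∈ closedBall (0 : ℂ) 1, 1 - conj z * w ≠ 0 := fun w hw e => by
    have h1 : ‖conj z * w‖ = 1 := by rw [← sub_eq_zero.1 e, norm_one]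
    have h2 : ‖w‖ ≤ 1 := by simpa using hw
    rw [norm_mul, RCLike.norm_conj] at h1
    nlinarith [norm_nonneg z, norm_nonneg w]
  have hk : DiffContOnCl ℂ (fun w => (1 - conj z * w)⁻¹) (ball 0 1) := by
    refine DiffContOnCl.inv ?_ (fun w hw => hne' w (hcl ▸ hw))
    exact (Differentiable.diffContOnCl (by fun_prop))
  have i1 : CircleIntegrable (fun w => ((w - 0) / (w - z)) • g w) 0 1 := by
    refine ContinuousOn.circleIntegrable zero_le_one ?_
    exact (ContinuousOn.div (by fun_prop) (by fun_prop) hne).smul hgs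
  have i2 : CircleIntegrable (fun w => ((w - 0) / (w - z)) • (1 : ℂ)) 0 1 := by
    refine ContinuousOn.circleIntegrable zero_le_one ?_
    exact (ContinuousOn.div (by fun_prop) (by fun_prop) hne).smul continuousOn_const
  have i3 : CircleIntegrable (fun w => (1 - conj z * w)⁻¹ • g w) 0 1 := by
    refine ContinuousOn.circleIntegrable zero_le_one ?_
    exact ((hcl ▸ hk.continuousOn).mono sphere_subset_closedBall).smul hgs
  have i4 : CircleIntegrable (fun w => conj ((1 - conj z * w)⁻¹ • g w)) 0 1 := by
    refine ContinuousOn.circleIntegrable zero_le_one ?_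
    exact Complex.continuous_conj.comp_continuousOn
      (((hcl ▸ hk.continuousOn).mono sphere_subset_closedBall).smul hgs)
  have a1 : Real.circleAverage (fun w => ((w - 0) / (w - z)) • g w) 0 1 = g z :=
    DiffContOnCl.circleAverage_smul_div (by simpa using hg) (by simpa using hz)
  have a2 : Real.circleAverage (fun w => ((w - 0) / (w - z)) • (1 : ℂ)) 0 1 = 1 :=
    DiffContOnCl.circleAverage_smul_div (f := fun _ => 1) diffContOnCl_const (by simpa using hz)
  have a3 : Real.circleAverage (fun w => (1 - conj z * w)⁻¹ • g w) 0 1 = 1 := by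
    rw [DiffContOnCl.circleAverage (by simpa using hk.smul hg)]
    simp [h0]
  have a4 : Real.circleAverage (fun w => conj ((1 - conj z * w)⁻¹ • g w)) 0 1 = 1 := by
    have := (Complex.conjCLE : ℂ →L[ℝ] ℂ).circleAverage_comp_comm i3
    rw [a3] at this
    simpa [Function.comp_def] using this
  have i14 : CircleIntegrable (fun w => ((w - 0) / (w - z)) • g w
      + conj ((1 - conj z * w)⁻¹ • g w)) 0 1 := i1.add i4
  have key : Set.EqOn (fun w => ((2 * (g w).re - 1 : ℝ) : ℂ) * (1 / (1 - z * conj w)))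
      (fun w => ((w - 0) / (w - z)) • g w + conj ((1 - conj z * w)⁻¹ • g w)
        - ((w - 0) / (w - z)) • (1 : ℂ)) (sphere 0 |1|) := by
    intro w hw
    rw [abs_one] at hw
    have hww : w * conj w = 1 := by
      rw [Complex.mul_conj, Complex.normSq_eq_norm_sq]
      simp [mem_sphere_zero_iff_norm.1 hw]
    have hw0 : w ≠ 0 := left_ne_zero_of_mul_eq_one hww
    have hk1 : 1 - z * conj w = (w - z) / w := by
      field_simp
      linear_combination (-z) * hww
    have hre : (2 : ℂ) * ((g w).re : ℂ) = g w + conj (g w) := by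
      rw [Complex.add_conj]; push_cast; ring
    have := hne w hw
    simp only [smul_eq_mul, map_mul, map_inv₀, map_sub, map_one, Complex.conj_conj, sub_zero]
    push_cast
    rw [hre, hk1]
    field_simp
  rw [Real.circleAverage_congr_sphere key, Real.circleAverage_fun_sub i14 i2,
    Real.circleAverage_fun_add i1 i4, a1, a2, a4]
  ring

/-- A continuous nonnegative `p` on the circle with mean value `1` defines the probability measure
`p(x̄) dx`, where `dx` is normalized arc length. The conjugation matches the kernel `1 / (1 - z x)`
of `cauchyT`, whose Cauchy variable is `w = x̄`. -/
lemma exists_measure_of_circleAverage {p : ℂ → ℝ} (hp : ContinuousOn p (sphere 0 1))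
    (hp0 : ∀ w ∈ sphere (0 : ℂ) 1, 0 ≤ p w) (hp1 : Real.circleAverage p 0 1 = 1) :
    ∃ ρ : Measure Circle, IsProbabilityMeasure ρ ∧ ∀ φ : ℂ → ℂ,
      Continuous (fun x : Circle => φ x) →
      ∫ x : Circle, φ x ∂ρ
        = Real.circleAverage (fun w => (p w : ℂ) * φ (starRingEnd ℂ w)) 0 1 := by
  have hpi := Real.pi_pos
  let d : ℝ → ℝ := fun θ => (2 * Real.pi)⁻¹ * p (circleMap 0 1 θ)
  have hd : Continuous d := continuous_const.mul
    (hp.comp_continuous (continuous_circleMap _ _) fun θ => circleMap_mem_sphere _ zero_le_one _)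
  have hd0 : ∀ θ, 0 ≤ d θ := fun θ =>
    mul_nonneg (by positivity) (hp0 _ (circleMap_mem_sphere _ zero_le_one _))
  let m : Measure ℝ := (volume.restrict (Set.Ioc 0 (2 * Real.pi))).withDensity
    fun θ => ENNReal.ofReal (d θ)
  have hm : IsProbabilityMeasure m := by
    constructor
    have hint : Integrable d (volume.restrict (Set.Ioc 0 (2 * Real.pi))) :=
      (intervalIntegrable_iff_integrableOn_Ioc_of_le (by positivity)).1 (hd.intervalIntegrable _ _)
    rw [withDensity_apply _ MeasurableSet.univ, Measure.restrict_univ,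
      ← ofReal_integral_eq_lintegral_ofReal hint (.of_forall hd0),
      ← intervalIntegral.integral_of_le (by positivity)]
    rw [Real.circleAverage_def, smul_eq_mul, ← intervalIntegral.integral_const_mul] at hp1
    simp only [d, hp1, ENNReal.ofReal_one]
  let e : ℝ → Circle := fun θ => Circle.exp (-θ)
  have he : Continuous e := by fun_prop
  refine ⟨m.map e, Measure.isProbabilityMeasure_map he.measurable.aemeasurable, fun φ hφ => ?_⟩
  rw [integral_map he.measurable.aemeasurable hφ.aestronglyMeasurable,
    integral_withDensity_eq_integral_toReal_smul (by fun_prop) (by simp),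
    ← intervalIntegral.integral_of_le (by positivity), Real.circleAverage_def,
    ← intervalIntegral.integral_smul]
  refine intervalIntegral.integral_congr fun θ _ => ?_
  have hc : ((e θ : Circle) : ℂ) = starRingEnd ℂ (circleMap 0 1 θ) := by
    simp [e, Circle.coe_exp, circleMap, ← Complex.exp_conj, Complex.exp_neg]
  simp only [ENNReal.toReal_ofReal (hd0 θ), hc, d, Complex.real_smul]
  push_cast
  ring

/-- The Herglotz representation for functions continuous up to the boundary: the representing measure
has density `2 re g - 1` with respect to normalized arc length, up to the reflection `x ↦ x̄`. -/
lemma herglotz_closed {g : ℂ → ℂ} (hg : DiffContOnCl ℂ g (ball 0 1)) (h0 : g 0 = 1)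
    (hre : ∀ w ∈ sphere (0 : ℂ) 1, 1 / 2 ≤ (g w).re) :
    ∃ ρ : Measure Circle, IsProbabilityMeasure ρ ∧ ∀ z ∈ ball (0 : ℂ) 1, cauchyT ρ z = g z := by
  have hcl : closure (ball (0 : ℂ) 1) = closedBall 0 1 := closure_ball _ one_ne_zero
  have hgs : ContinuousOn g (sphere 0 1) :=
    (hcl ▸ hg.continuousOn).mono sphere_subset_closedBall
  have hp : ContinuousOn (fun w => 2 * (g w).re - 1) (sphere 0 1) := by
    have := Complex.continuous_re.comp_continuousOn hgs
    exact (continuousOn_const.mul this).sub continuousOn_const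
  have hp1 : Real.circleAverage (fun w => 2 * (g w).re - 1) 0 1 = 1 := by
    -- The case `z = 0` of the Schwarz formula says that the density has total mass `1`.
    have h1 := circleAverage_herglotz hg h0 (z := 0) (by simp)
    have h2 := Complex.ofRealCLM.circleAverage_comp_comm
      (hp.circleIntegrable zero_le_one)
    simp only [Function.comp_def, Complex.ofRealCLM_apply] at h2
    simp only [zero_mul, sub_zero, div_one, mul_one, h0] at h1
    rw [h1] at h2
    exact_mod_cast h2.symm
  obtain ⟨ρ, hρ, H⟩ := exists_measure_of_circleAverage hp
    (fun w hw => by linarith [hre w hw]) hp1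
  refine ⟨ρ, hρ, fun z hz => ?_⟩
  rw [← circleAverage_herglotz hg h0 hz]
  exact H (fun x => 1 / (1 - z * x)) (continuous_kernel hz)

/-- The Herglotz representation theorem. A holomorphic `G` on the disc with `G 0 = 1` and
`re G ≥ 1 / 2` is the transform of a probability measure: the dilations `G (r z)`, `r < 1`, are
represented by measures on the compact circle, and any weak limit point as `r → 1` represents `G`. -/
lemma herglotz {G : ℂ → ℂ} (hG : DifferentiableOn ℂ G (ball 0 1)) (h0 : G 0 = 1)
    (hre : ∀ w ∈ ball (0 : ℂ) 1, 1 / 2 ≤ (G w).re) :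
    ∃ ρ : Measure Circle, IsProbabilityMeasure ρ ∧ ∀ z ∈ ball (0 : ℂ) 1, cauchyT ρ z = G z := by
  let r : ℕ → ℝ := fun n => 1 - 1 / ((n : ℝ) + 1 + 1)
  have hr : ∀ n, 0 ≤ r n ∧ r n < 1 := fun n => by
    have h1 : (0 : ℝ) < (n : ℝ) + 1 + 1 := by positivity
    have h2 : 1 / ((n : ℝ) + 1 + 1) ≤ 1 := by
      rw [div_le_one h1]; linarith [Nat.cast_nonneg (α := ℝ) n]
    exact ⟨by simpa [r] using h2, by have := one_div_pos.2 h1; simp only [r]; linarith⟩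
  have hrt : Tendsto r atTop (𝓝 1) := by
    have := (tendsto_one_div_add_atTop_nhds_zero_nat (𝕜 := ℝ)).comp (tendsto_add_atTop_nat 1)
    simpa [r, Function.comp_def] using this.const_sub 1
  have hball : ∀ n, ∀ z ∈ closedBall (0 : ℂ) 1, (r n : ℂ) * z ∈ ball (0 : ℂ) 1 := fun n z hz => by
    have h1 : ‖z‖ ≤ 1 := by simpa using hz
    rw [mem_ball_zero_iff, norm_mul, Complex.norm_real, Real.norm_of_nonneg (hr n).1]
    nlinarith [hr n, norm_nonneg z]
  have hex : ∀ n, ∃ ρ : ProbabilityMeasure Circle,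
      ∀ z ∈ ball (0 : ℂ) 1, cauchyT ρ z = G (r n * z) := fun n => by
    have hd : DifferentiableOn ℂ (fun z => G (r n * z)) (closedBall 0 1) :=
      hG.comp (by fun_prop) (hball n)
    obtain ⟨ρ, hρ, H⟩ := herglotz_closed (g := fun z => G (r n * z))
      (DifferentiableOn.diffContOnCl (by rwa [closure_ball _ one_ne_zero])) (by simpa using h0)
      (fun w hw => hre _ (hball n w (sphere_subset_closedBall hw)))
    exact ⟨⟨ρ, hρ⟩, H⟩
  choose ρ hρ using hex
  -- Convergence along an ultrafilter plays the role of extracting a subsequence.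
  let u : Ultrafilter ℕ := hyperfilter ℕ
  have hlim : Tendsto ρ u (𝓝 (u.map ρ).lim) := (u.map ρ).le_nhds_lim
  refine ⟨((u.map ρ).lim : ProbabilityMeasure Circle), inferInstance, fun z hz => ?_⟩
  rw [ProbabilityMeasure.tendsto_iff_forall_integral_rclike_tendsto ℂ] at hlim
  -- The kernel `x ↦ 1 / (1 - z x)` is a continuous test function, so weak convergence applies to it.
  have h1 := hlim (BoundedContinuousFunction.mkOfCompact ⟨_, continuous_kernel hz⟩)
  have h2 : Tendsto (fun n => cauchyT (ρ n) z) u (𝓝 (G z)) := by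
    simp_rw [fun n => hρ n z hz]
    have hc : ContinuousAt G z := (hG.differentiableAt (isOpen_ball.mem_nhds hz)).continuousAt
    have ht : Tendsto (fun n => (r n : ℂ) * z) u (𝓝 z) := by
      have := ((Complex.continuous_ofReal.tendsto 1).comp hrt).mul_const z
      simp only [Complex.ofReal_one, one_mul] at this
      exact this.mono_left (Nat.hyperfilter_le_atTop)
    exact hc.tendsto.comp ht
  exact tendsto_nhds_unique h1 h2

/-! ### The monotone convolution -/

theorem monotone_convolution_exists_unique (μ ν : Measure Circle)
    (hμ : IsProbabilityMeasure μ) (hν : IsProbabilityMeasure ν) :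
    ∃! ρ : Measure Circle,
      IsProbabilityMeasure ρ ∧ ∀ z ∈ ball (0 : ℂ) 1, Km ρ z = Km μ (Km ν z) := by
  have hiff : ∀ ρ : Measure Circle, IsProbabilityMeasure ρ → ∀ z ∈ ball (0 : ℂ) 1,
      (Km ρ z = Km μ (Km ν z) ↔ cauchyT ρ z = cauchyT μ (Km ν z)) := fun ρ hρ z hz => by
    rw [Km_eq ρ hz, Km_eq μ (Km_mem_ball ν hz), sub_right_inj, inv_inj]
  have hK : DifferentiableOn ℂ (Km ν) (ball 0 1) := by
    have := (differentiableOn_cauchyT ν).inv fun z hz => cauchyT_ne_zero ν hz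
    exact (this.const_sub 1).congr fun z hz => Km_eq ν hz
  have hK0 : Km ν 0 = 0 := by simp [Km, psiM]
  obtain ⟨ρ, hρ, H⟩ := herglotz (G := fun z => cauchyT μ (Km ν z))
    ((differentiableOn_cauchyT μ).comp hK fun z hz => Km_mem_ball ν hz)
    (by simp [hK0, cauchyT]) (fun w hw => (half_lt_re_cauchyT μ (Km_mem_ball ν hw)).le)
  refine ⟨ρ, ⟨hρ, fun z hz => (hiff ρ hρ z hz).2 (H z hz)⟩, fun ρ' ⟨hρ', H'⟩ => ?_⟩
  exact ext_of_cauchyT fun z hz => ((hiff ρ' hρ' z hz).1 (H' z hz)).trans (H z hz).symm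
end

section
/- For probability measures μ, ν on the unit circle S¹, the monotone convolution satisfies the integral formula μ ▷ ν = ∫_{S¹} (δ_x ▷ ν) dμ(x); that is, for every Borel set E ⊆ S¹ one has (μ ▷ ν)(E) = ∫_{S¹} (δ_x ▷ ν)(E) dμ(x). -/
/-!
For a probability measure `m` on the circle, `1 + ψ_m(z) = ∫ (1 - zx)⁻¹ dm(x)` has real part greater
than `1/2` on the unit disc. Hence it is nonzero, `K_m` maps the disc into itself, and
`1 + ψ_m = 1 / (1 - K_m)`. Applied to `σ x` (that is, `δ_x ▷ ν`), this gives
`∫ (1 - zy)⁻¹ dσ_x(y) = (1 - K_ν(z) x)⁻¹`, and integrating over `μ` gives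
`1 + ψ_μ(K_ν(z)) = 1 + ψ_ρ(z)`. So `ρ` and the mixture `∫ σ x dμ(x)` have the same integrals against
all resolvents `y ↦ (1 - zy)⁻¹`.

The resolvents and their conjugates span a dense subspace of `C(Circle, ℂ)`
(`mem_of_resolvent_mem`): iterated difference quotients in `z` produce the monomials, and
trigonometric polynomials are dense. This density is used twice. It shows that `x ↦ ∫ f dσ_x` is
measurable for every continuous `f`, because this holds for resolvents by the formula above; therefore
`σ` is a Markov kernel and the mixture is the measure `μ.bind σ`. Then it shows that `ρ` and
`μ.bind σ` agree on continuous functions, so they are equal.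
-/

open MeasureTheory Metric

open Filter Topology

/-! ### Resolvent functions are total in `C(Circle, ℂ)` -/

lemma one_sub_mul_circle_ne_zero {z : ℂ} (hz : ‖z‖ < 1) (x : Circle) : 1 - z * (x : ℂ) ≠ 0 := by
  intro h
  have h1 : ‖z * (x : ℂ)‖ = 1 := by rw [← sub_eq_zero.mp h]; simp
  simp [Circle.norm_coe] at h1
  linarith

/-- The resolvent `x ↦ (1 - zx)⁻¹` as a continuous function on the circle, for `|z| < 1`. -/
noncomputable def resolventFn (z : ℂ) (hz : ‖z‖ < 1) : C(Circle, ℂ) where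
  toFun x := (1 - z * (x : ℂ))⁻¹
  continuous_toFun := by
    refine Continuous.inv₀ (by fun_prop) (one_sub_mul_circle_ne_zero hz)

/-- The monomial `x ↦ x ^ n` as a continuous function on the circle. -/
noncomputable def monomialFn (n : ℕ) : C(Circle, ℂ) where
  toFun x := (x : ℂ) ^ n
  continuous_toFun := by fun_prop

/-- A closed subspace containing all resolvents contains all functions `x ^ n / (1 - zx)`. These are
iterated difference quotients, in `z`, of resolvents; at `z = 0` the quotient becomes a limit. -/
lemma mem_of_mul_one_sub_eq_pow (S : Submodule ℂ C(Circle, ℂ)) (hS : IsClosed (S : Set C(Circle, ℂ)))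
    (hres : ∀ (z : ℂ) (hz : ‖z‖ < 1), resolventFn z hz ∈ S) (n : ℕ) :
    ∀ (z : ℂ) (_ : ‖z‖ < 1) (f : C(Circle, ℂ)),
      (∀ x : Circle, f x * (1 - z * (x : ℂ)) = (x : ℂ) ^ n) → f ∈ S := by
  induction n with
  | zero =>
    intro z hz f hf
    have : f = resolventFn z hz := by
      ext x
      exact eq_inv_of_mul_eq_one_left (by simpa using hf x)
    exact this ▸ hres z hz
  | succ n ih =>
    have hmono : monomialFn n ∈ S := ih 0 (by simp) _ (by simp [monomialFn])
    have hne : ∀ (z : ℂ) (_ : ‖z‖ < 1) (_ : z ≠ 0) (f : C(Circle, ℂ)),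
        (∀ x : Circle, f x * (1 - z * (x : ℂ)) = (x : ℂ) ^ (n + 1)) → f ∈ S := by
      intro z hz h0 f hf
      have hg : monomialFn n + z • f ∈ S := by
        refine ih z hz _ fun x => ?_
        have := hf x
        simp only [monomialFn, ContinuousMap.add_apply, ContinuousMap.coe_mk,
          ContinuousMap.smul_apply, smul_eq_mul]
        linear_combination z * this
      have h2 : z • f ∈ S := by simpa using S.sub_mem hg hmono
      exact (S.smul_mem_iff h0).mp h2
    intro z hz f hf
    rcases eq_or_ne z 0 with rfl | h0
    -- At `z = 0`, `x ^ (n + 1)` is the uniform limit of `x ^ (n + 1) / (1 - wₖ x)`, `wₖ = 1 / (k + 2)`.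
    · have hfx : ∀ x, f x = (x : ℂ) ^ (n + 1) := by simpa using hf
      let w : ℕ → ℂ := fun k => ((1 / ((k : ℝ) + 2) : ℝ) : ℂ)
      have hwn : ∀ k, ‖w k‖ = 1 / ((k : ℝ) + 2) := fun k => by
        rw [Complex.norm_real, Real.norm_of_nonneg (by positivity)]
      have hw : ∀ k, ‖w k‖ < 1 := fun k => by
        rw [hwn, div_lt_one (by positivity)]
        have : (0 : ℝ) ≤ k := by positivity
        linarith
      have hw0 : ∀ k, w k ≠ 0 := fun k => by
        rw [← norm_pos_iff, hwn]; positivity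
      let g : ℕ → C(Circle, ℂ) := fun k => monomialFn (n + 1) * resolventFn (w k) (hw k)
      have hgx : ∀ k x, g k x * (1 - w k * (x : ℂ)) = (x : ℂ) ^ (n + 1) := fun k x => by
        simp [g, monomialFn, resolventFn, mul_assoc,
          inv_mul_cancel₀ (one_sub_mul_circle_ne_zero (hw k) x)]
      have hgS : ∀ k, g k ∈ S := fun k => hne (w k) (hw k) (hw0 k) _ (hgx k)
      refine hS.mem_of_tendsto (f := g) (b := atTop) ?_ (Eventually.of_forall hgS)
      rw [tendsto_iff_dist_tendsto_zero]
      refine squeeze_zero (fun _ => dist_nonneg) (fun k => ?_)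
        tendsto_one_div_add_atTop_nhds_zero_nat
      rw [ContinuousMap.dist_le (by positivity)]
      intro x
      have hlow : ((k : ℝ) + 1) / (k + 2) ≤ ‖1 - w k * (x : ℂ)‖ := by
        have h1 := norm_sub_norm_le (1 : ℂ) (w k * (x : ℂ))
        simp only [norm_one, norm_mul, Circle.norm_coe, mul_one, hwn] at h1
        refine le_trans (le_of_eq ?_) h1
        field_simp
        ring
      have heq : (g k x - f x) * (1 - w k * (x : ℂ)) = (x : ℂ) ^ (n + 1) * (w k * x) := by
        rw [sub_mul, hgx, hfx]; ring
      have hn : ‖g k x - f x‖ * ‖1 - w k * (x : ℂ)‖ = 1 / ((k : ℝ) + 2) := by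
        rw [← norm_mul, heq]; simp [hwn, Circle.norm_coe]
      rw [dist_eq_norm]
      have h3 : ‖g k x - f x‖ * (((k : ℝ) + 1) / (k + 2)) ≤ 1 / ((k : ℝ) + 2) :=
        hn ▸ mul_le_mul_of_nonneg_left hlow (norm_nonneg _)
      rw [le_div_iff₀ (by positivity)]
      rw [← mul_div_assoc, div_le_div_iff_of_pos_right (by positivity)] at h3
      exact h3
    · exact hne z hz h0 f hf

/-- A closed, conjugation-invariant subspace of `C(Circle, ℂ)` containing all resolvents is
everything: it contains the monomials `x ^ n`, `n ≥ 0`, their conjugates, hence all trigonometric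
polynomials. -/
lemma mem_of_resolvent_mem (S : Submodule ℂ C(Circle, ℂ)) (hS : IsClosed (S : Set C(Circle, ℂ)))
    (hres : ∀ (z : ℂ) (hz : ‖z‖ < 1), resolventFn z hz ∈ S)
    (hstar : ∀ f ∈ S, star f ∈ S) (f : C(Circle, ℂ)) : f ∈ S := by
  have hmono : ∀ n, monomialFn n ∈ S := fun n =>
    mem_of_mul_one_sub_eq_pow S hS hres n 0 (by simp) _ (by simp [monomialFn])
  have : Fact ((0 : ℝ) < 1) := ⟨one_pos⟩
  let e : AddCircle (1 : ℝ) ≃ₜ Circle := AddCircle.homeomorphCircle one_ne_zero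
  have he : ∀ y, (e y) = AddCircle.toCircle y := AddCircle.homeomorphCircle_apply _
  let es : C(Circle, AddCircle (1 : ℝ)) := ⟨e.symm, e.symm.continuous⟩
  let L : C(AddCircle (1 : ℝ), ℂ) →ₗ[ℂ] C(Circle, ℂ) :=
    { toFun := fun h => h.comp es
      map_add' := fun _ _ => rfl
      map_smul' := fun _ _ => rfl }
  have hL : Continuous L := ContinuousMap.continuous_precomp es
  have hfour : ∀ n : ℤ, L (fourier n) ∈ S := by
    intro n
    have hval : ∀ x : Circle, L (fourier n) x = (x : ℂ) ^ n := fun x => by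
      have : AddCircle.toCircle (e.symm x) = x := by rw [← he]; exact e.apply_symm_apply x
      simp only [L, es, LinearMap.coe_mk, AddHom.coe_mk, ContinuousMap.comp_apply,
        ContinuousMap.coe_mk, fourier_apply, AddCircle.toCircle_zsmul, this, Circle.coe_zpow]
    obtain ⟨m, rfl | rfl⟩ := n.eq_nat_or_neg
    · convert hmono m
      ext x
      rw [hval]; simp [monomialFn]
    · convert hstar _ (hmono m)
      ext x
      rw [hval]
      simp [monomialFn, ← Circle.coe_inv_eq_conj]
  have hle : (Submodule.span ℂ (Set.range (@fourier 1))).topologicalClosure ≤ S.comap L := by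
    refine Submodule.topologicalClosure_minimal _ ?_ (hS.preimage hL)
    rw [Submodule.span_le]
    rintro _ ⟨n, rfl⟩
    exact hfour n
  rw [span_fourier_closure_eq_top] at hle
  have hf : L (f.comp ⟨e, e.continuous⟩) = f := by
    ext x
    simp [L, es]
  exact hf ▸ hle (Submodule.mem_top (x := f.comp ⟨e, e.continuous⟩))

/-! ### Integration of continuous functions on the circle -/

lemma integrable_continuousMap (m : Measure Circle) [IsProbabilityMeasure m] (f : C(Circle, ℂ)) :
    Integrable f m :=
  f.continuous.integrable_of_hasCompactSupport (HasCompactSupport.of_compactSpace _)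

lemma continuous_integral_continuousMap (m : Measure Circle) [IsProbabilityMeasure m] :
    Continuous fun f : C(Circle, ℂ) => ∫ x, f x ∂m := by
  refine LipschitzWith.continuous (K := 1) (LipschitzWith.of_dist_le_mul fun f g => ?_)
  rw [dist_eq_norm, ← integral_sub (integrable_continuousMap m f) (integrable_continuousMap m g)]
  refine (norm_integral_le_of_norm_le_const (C := dist f g) (Eventually.of_forall fun x => ?_)).trans
    (by simp)
  rw [← dist_eq_norm]
  exact ContinuousMap.dist_apply_le_dist x

lemma lintegral_eq_ofReal_re_integral (m : Measure Circle) [IsProbabilityMeasure m]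
    (h : BoundedContinuousFunction Circle NNReal) :
    ∫⁻ x, h x ∂m = ENNReal.ofReal
      (∫ x, (⟨fun x => ((h x : ℝ) : ℂ), by fun_prop⟩ : C(Circle, ℂ)) x ∂m).re := by
  simp only [ContinuousMap.coe_mk]
  rw [integral_complex_ofReal, Complex.ofReal_re]
  rw [ofReal_integral_eq_lintegral_ofReal _ (Eventually.of_forall fun x => by positivity)]
  · simp
  · exact Continuous.integrable_of_hasCompactSupport (by fun_prop)
      (HasCompactSupport.of_compactSpace _)

/-- Closed sets form a generating π-system, and their indicators are limits of continuous
functions. -/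
lemma measurable_of_measurable_integral (σ : Circle → Measure Circle)
    (hσ : ∀ x, IsProbabilityMeasure (σ x))
    (h : ∀ f : C(Circle, ℂ), Measurable fun x => ∫ y, f y ∂σ x) : Measurable σ := by
  refine .measure_of_isPiSystem_of_isProbabilityMeasure (S := {F | IsClosed F})
    ?_ isPiSystem_isClosed fun F hF => ?_
  · rw [← borel_eq_generateFrom_isClosed]; exact BorelSpace.measurable_eq
  · refine measurable_of_tendsto_metrizable (f := fun n x => ∫⁻ y, hF.apprSeq n y ∂σ x)
      (fun n => ?_) (tendsto_pi_nhds.mpr fun x =>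
        HasOuterApproxClosed.tendsto_lintegral_apprSeq hF (σ x))
    simp_rw [lintegral_eq_ofReal_re_integral]
    exact (Complex.measurable_re.comp (h _)).ennreal_ofReal

lemma measure_eq_of_integral_eq (m m' : Measure Circle) [IsProbabilityMeasure m]
    [IsProbabilityMeasure m'] (h : ∀ f : C(Circle, ℂ), ∫ x, f x ∂m = ∫ x, f x ∂m') : m = m' := by
  refine ext_of_forall_lintegral_eq_of_IsFiniteMeasure fun f => ?_
  rw [lintegral_eq_ofReal_re_integral, lintegral_eq_ofReal_re_integral, h]

lemma integral_star_continuousMap (m : Measure Circle) (f : C(Circle, ℂ)) :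
    ∫ x, (star f) x ∂m = (starRingEnd ℂ) (∫ x, f x ∂m) := by
  rw [← integral_conj]; rfl

/-! ### K-transforms and resolvent integrals -/

lemma integral_resolventFn (m : Measure Circle) [IsProbabilityMeasure m] (z : ℂ) (hz : ‖z‖ < 1) :
    ∫ x, resolventFn z hz x ∂m = 1 + psiM m z := by
  have : (fun x : Circle => z * (x : ℂ) / (1 - z * x)) = fun x => resolventFn z hz x - 1 := by
    ext x
    have := one_sub_mul_circle_ne_zero hz x
    simp only [resolventFn, ContinuousMap.coe_mk]
    field_simp
    ring
  rw [psiM, this, integral_sub (integrable_continuousMap m _) (integrable_const _)]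
  simp

lemma half_lt_re_one_add_psiM (m : Measure Circle) [IsProbabilityMeasure m] (z : ℂ)
    (hz : ‖z‖ < 1) : 1 / 2 < (1 + psiM m z).re := by
  -- `w ↦ 1 / (1 - w)` maps the circle `|w| = r` into the half-plane `Re ≥ 1 / (1 + r)`.
  have key : ∀ x, 1 / (1 + ‖z‖) ≤ (resolventFn z hz x).re := by
    intro x
    set w : ℂ := z * x with hw
    have hwn : ‖w‖ = ‖z‖ := by simp [hw, Circle.norm_coe]
    have hne : 1 - w ≠ 0 := one_sub_mul_circle_ne_zero hz x
    have hpos : 0 < Complex.normSq (1 - w) := Complex.normSq_pos.mpr hne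
    have h1 : (resolventFn z hz x).re = (1 - w.re) / Complex.normSq (1 - w) := by
      simp [resolventFn, ← hw, Complex.inv_re]
    have h2 : Complex.normSq (1 - w) = 1 - 2 * w.re + ‖z‖ ^ 2 := by
      rw [← hwn, ← Complex.normSq_eq_norm_sq, Complex.normSq_apply, Complex.normSq_apply]
      simp; ring
    have h3 : -‖z‖ ≤ w.re := hwn ▸ (abs_le.mp (Complex.abs_re_le_norm w)).1
    rw [h1, div_le_div_iff₀ (by positivity) hpos, h2]
    nlinarith [mul_nonneg (by linarith : 0 ≤ ‖z‖ + w.re) (by linarith : 0 ≤ 1 - ‖z‖)]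
  rw [← integral_resolventFn m z hz]
  have hre : (∫ x, resolventFn z hz x ∂m).re = ∫ x, (resolventFn z hz x).re ∂m :=
    (integral_re (integrable_continuousMap m _)).symm
  rw [hre]
  have h4 : 1 / (1 + ‖z‖) ≤ ∫ x, (resolventFn z hz x).re ∂m := by
    have := integral_mono (μ := m) (integrable_const (1 / (1 + ‖z‖)))
      (integrable_continuousMap m (resolventFn z hz)).re key
    simpa using this
  refine lt_of_lt_of_le ?_ h4
  exact one_div_lt_one_div_of_lt (by positivity) (by linarith)

lemma one_add_psiM_ne_zero (m : Measure Circle) [IsProbabilityMeasure m] (z : ℂ)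
    (hz : ‖z‖ < 1) : 1 + psiM m z ≠ 0 := by
  intro h
  have := half_lt_re_one_add_psiM m z hz
  rw [h] at this
  norm_num at this

/-- `K` maps the disc to itself: `|ψ| < |1 + ψ|` means `Re ψ > -1/2`. -/
lemma norm_Km_lt_one (m : Measure Circle) [IsProbabilityMeasure m] (z : ℂ)
    (hz : ‖z‖ < 1) : ‖Km m z‖ < 1 := by
  have h := half_lt_re_one_add_psiM m z hz
  rw [Km, norm_div, div_lt_one (norm_pos_iff.mpr (one_add_psiM_ne_zero m z hz))]
  refine lt_of_pow_lt_pow_left₀ 2 (norm_nonneg _) ?_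
  rw [← Complex.normSq_eq_norm_sq, ← Complex.normSq_eq_norm_sq, Complex.normSq_apply,
    Complex.normSq_apply]
  simp at h ⊢
  nlinarith

/-- Inverting `K = ψ / (1 + ψ)`: the K-transform determines all resolvent integrals. -/
lemma one_add_psiM_eq (m : Measure Circle) [IsProbabilityMeasure m] (z : ℂ)
    (hz : ‖z‖ < 1) : 1 + psiM m z = (1 - Km m z)⁻¹ := by
  have h := one_add_psiM_ne_zero m z hz
  rw [Km]
  field_simp
  simp

/-- The integral formula `μ ▷ ν = ∫_{S¹} (δ_x ▷ ν) dμ(x)`: if `ρ = μ ▷ ν` and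
`σ x = δ_x ▷ ν` (characterized by their K-transforms, with
`K_{δ_x ▷ ν}(z) = x K_ν(z)`), then `ρ(E) = ∫ σ x (E) dμ(x)` for every Borel set `E`. -/
theorem monotone_convolution_integral_formula (μ ν : Measure Circle)
    (hμ : IsProbabilityMeasure μ) (hν : IsProbabilityMeasure ν)
    (ρ : Measure Circle) (hρ : IsProbabilityMeasure ρ)
    (hKρ : ∀ z ∈ ball (0 : ℂ) 1, Km ρ z = Km μ (Km ν z))
    (σ : Circle → Measure Circle) (hσ : ∀ x, IsProbabilityMeasure (σ x))
    (hKσ : ∀ x : Circle, ∀ z ∈ ball (0 : ℂ) 1, Km (σ x) z = (x : ℂ) * Km ν z) :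
    ∀ E : Set Circle, MeasurableSet E → ρ E = ∫⁻ x, σ x E ∂μ := by
  have hσres : ∀ (z : ℂ) (hz : ‖z‖ < 1) (x : Circle),
      ∫ y, resolventFn z hz y ∂σ x = resolventFn (Km ν z) (norm_Km_lt_one ν z hz) x := by
    intro z hz x
    rw [integral_resolventFn, one_add_psiM_eq _ _ hz, hKσ x z (by simpa using hz), mul_comm]
    rfl
  have hmeas : Measurable σ := by
    refine measurable_of_measurable_integral σ hσ fun f => ?_
    let S : Submodule ℂ C(Circle, ℂ) :=
      { carrier := {f | Measurable fun x => ∫ y, f y ∂σ x}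
        add_mem' := fun {f g} hf hg => by
          have : (fun x => ∫ y, (f + g) y ∂σ x) =
              fun x => (∫ y, f y ∂σ x) + ∫ y, g y ∂σ x := by
            ext x
            exact integral_add (integrable_continuousMap _ f) (integrable_continuousMap _ g)
          rw [Set.mem_ofPred_eq, this]
          exact Measurable.add hf hg
        zero_mem' := by simp
        smul_mem' := fun c f hf => by
          have : (fun x => ∫ y, (c • f) y ∂σ x) = fun x => c * ∫ y, f y ∂σ x := by
            ext x
            exact integral_const_mul c _
          simpa only [Set.mem_ofPred_eq, this] using hf.const_mul c }
    have hS : IsClosed (S : Set C(Circle, ℂ)) := by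
      refine IsSeqClosed.isClosed fun g f hg hgf => ?_
      exact measurable_of_tendsto_metrizable hg (tendsto_pi_nhds.mpr fun x =>
        ((continuous_integral_continuousMap (σ x)).tendsto f).comp hgf)
    refine mem_of_resolvent_mem S hS (fun z hz => ?_) (fun f hf => ?_) f
    · change Measurable fun x => ∫ y, resolventFn z hz y ∂σ x
      simp_rw [hσres]
      exact (ContinuousMap.continuous _).measurable
    · change Measurable fun x => ∫ y, (star f) y ∂σ x
      simp_rw [integral_star_continuousMap]
      exact Complex.continuous_conj.measurable.comp hf
  let κ : ProbabilityTheory.Kernel Circle Circle := ⟨σ, hmeas⟩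
  have : ProbabilityTheory.IsMarkovKernel κ := ⟨hσ⟩
  have hρeq : ρ = μ.bind κ := by
    refine measure_eq_of_integral_eq _ _ fun f => ?_
    let S : Submodule ℂ C(Circle, ℂ) :=
      { carrier := {f | ∫ x, f x ∂ρ = ∫ x, f x ∂(μ.bind κ)}
        add_mem' := fun {f g} hf hg => by
          have h (m : Measure Circle) [IsProbabilityMeasure m] :
              ∫ y, (f + g) y ∂m = (∫ y, f y ∂m) + ∫ y, g y ∂m :=
            integral_add (integrable_continuousMap _ f) (integrable_continuousMap _ g)
          rw [Set.mem_ofPred_eq] at *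
          rw [h, h, hf, hg]
        zero_mem' := by simp
        smul_mem' := fun c f hf => by
          have h (m : Measure Circle) : ∫ y, (c • f) y ∂m = c * ∫ y, f y ∂m :=
            integral_const_mul c _
          rw [Set.mem_ofPred_eq] at *
          rw [h, h, hf] }
    have hS : IsClosed (S : Set C(Circle, ℂ)) :=
      isClosed_eq (continuous_integral_continuousMap _) (continuous_integral_continuousMap _)
    refine mem_of_resolvent_mem S hS (fun z hz => ?_) (fun f hf => ?_) f
    · change ∫ x, resolventFn z hz x ∂ρ = ∫ x, resolventFn z hz x ∂(μ.bind κ)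
      rw [Measure.comp_eq_comp_const_apply,
        ProbabilityTheory.Kernel.integral_comp
          (Measure.comp_eq_comp_const_apply (κ := κ) (μ := μ) ▸ integrable_continuousMap _ _)]
      change _ = ∫ x, ∫ y, resolventFn z hz y ∂σ x ∂μ
      simp_rw [hσres]
      rw [integral_resolventFn, integral_resolventFn, one_add_psiM_eq _ _ hz,
        one_add_psiM_eq _ _ (norm_Km_lt_one ν z hz), hKρ z (by simpa using hz)]
    · change ∫ y, (star f) y ∂ρ = ∫ y, (star f) y ∂(μ.bind κ)
      rw [integral_star_continuousMap, integral_star_continuousMap]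
      exact congrArg _ hf
  intro E hE
  rw [hρeq, Measure.bind_apply hE κ.aemeasurable]
  rfl
end
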